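/- TV denoising of the perturbed staircase, ε < 0, intermediate λ regime: let M ≥ 1, N = 4M, −1 < ε < 0, and let y ∈ ℝ^N equal −1 on l₁, −ε on l₂, ε on l₃ and 1 on l₄. For every λ with −εM/2 ≤ λ ≤ M, the unique minimizer of f_λ(x) = (1/2)‖y − x‖₂² + λ Σ_{i=1}^{N−1}|x_{i+1} − x_i| is the vector x_λ⋆ equal to −1 + λ/M on l₁, 0 on l₂ ∪ l₃, and 1 − λ/M on l₄. -/

import Mathlib

/-!
The minimizer is certified by a dual vector `u`, the running sum of `xs - y`. Over the blocks it
climbs linearly from `0` to `lam`, falls to `lam + ε M`, returns to `lam`, and falls back to `0`.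
The bound `-ε M / 2 ≤ lam` says exactly that its lowest interior value is at least `-lam`, and
`lam ≤ M` says that both jumps of `xs` are upward, where `u = lam`; so `u` is `lam` times a
subgradient of the total variation at `xs`. `energy_gap_of_certificate` turns such a `u` into the
quadratic growth bound `f xs + (1/2) ‖x - xs‖² ≤ f x`, which gives minimality and uniqueness.
-/

theorem sum_by_parts (u w : ℕ → ℝ) (n : ℕ) :
    ∑ i ∈ Finset.Icc 1 (n + 1), (u i - u (i - 1)) * w i
      = u (n + 1) * w (n + 1) - u 0 * w 1 - ∑ i ∈ Finset.Icc 1 n, u i * (w (i + 1) - w i) := by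
  induction n with
  | zero => simp; ring
  | succ k ih =>
    rw [Finset.sum_Icc_succ_top (by omega), ih, Finset.sum_Icc_succ_top (by omega)]
    simp only [Nat.add_sub_cancel]
    ring

/-- A dual certificate `u` (vanishing at both ends, bounded by `lam`, with increments `xs - y`, and
aligned with the jumps of `xs`) forces quadratic growth of the TV objective around `xs`. -/
theorem energy_gap_of_certificate (n : ℕ) (y xs u x : ℕ → ℝ) (lam : ℝ)
    (h0 : u 0 = 0) (h1 : u (n + 1) = 0)
    (hb : ∀ i ∈ Finset.Icc 1 n, |u i| ≤ lam)
    (hd : ∀ i ∈ Finset.Icc 1 (n + 1), xs i - y i = u i - u (i - 1))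
    (ha : ∀ i ∈ Finset.Icc 1 n, u i * (xs (i + 1) - xs i) = lam * |xs (i + 1) - xs i|) :
    ((1 / 2) * ∑ i ∈ Finset.Icc 1 (n + 1), (y i - xs i) ^ 2
        + lam * ∑ i ∈ Finset.Icc 1 n, |xs (i + 1) - xs i|)
      + (1 / 2) * ∑ i ∈ Finset.Icc 1 (n + 1), (x i - xs i) ^ 2
    ≤ (1 / 2) * ∑ i ∈ Finset.Icc 1 (n + 1), (y i - x i) ^ 2
        + lam * ∑ i ∈ Finset.Icc 1 n, |x (i + 1) - x i| := by
  have hp := sum_by_parts u (fun i => x i - xs i) n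
  rw [h0, h1] at hp
  have hq : ∑ i ∈ Finset.Icc 1 (n + 1), (y i - x i) ^ 2
      = ∑ i ∈ Finset.Icc 1 (n + 1), (y i - xs i) ^ 2
        + ∑ i ∈ Finset.Icc 1 (n + 1), (x i - xs i) ^ 2
        + 2 * ∑ i ∈ Finset.Icc 1 (n + 1), (u i - u (i - 1)) * (x i - xs i) := by
    rw [Finset.mul_sum, ← Finset.sum_add_distrib, ← Finset.sum_add_distrib]
    refine Finset.sum_congr rfl fun i hi => ?_
    rw [← hd i hi]
    ring
  have ht : ∑ i ∈ Finset.Icc 1 n, u i * ((x (i + 1) - xs (i + 1)) - (x i - xs i))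
        + lam * ∑ i ∈ Finset.Icc 1 n, |xs (i + 1) - xs i|
      ≤ lam * ∑ i ∈ Finset.Icc 1 n, |x (i + 1) - x i| := by
    rw [Finset.mul_sum, Finset.mul_sum, ← Finset.sum_add_distrib]
    refine Finset.sum_le_sum fun i hi => ?_
    have h2 : u i * (x (i + 1) - x i) ≤ lam * |x (i + 1) - x i| :=
      (le_abs_self _).trans (by
        rw [abs_mul]
        exact mul_le_mul_of_nonneg_right (hb i hi) (abs_nonneg _))
    linarith [ha i hi]
  linarith

/-- The running sum of `xs - y` for the staircase, in closed form. -/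
noncomputable def stairDual (M : ℕ) (ε lam : ℝ) (i : ℕ) : ℝ :=
  if i ≤ M then lam * i / M
  else if i ≤ 2 * M then lam + ε * (i - M)
  else if i ≤ 3 * M then lam + ε * (3 * M - i)
  else lam * (4 * M - i) / M

theorem abs_stairDual_le (M : ℕ) (hM : 1 ≤ M) (ε lam : ℝ) (hε : ε < 0)
    (hlam : -ε * M / 2 ≤ lam) (i : ℕ) (hi : i ≤ 4 * M) : |stairDual M ε lam i| ≤ lam := by
  have hMR : (0 : ℝ) < M := by exact_mod_cast hM
  have hl : 0 ≤ lam := le_trans (by nlinarith) hlam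
  have hi0 : (0 : ℝ) ≤ i := Nat.cast_nonneg i
  have hiR : (i : ℝ) ≤ 4 * M := by exact_mod_cast hi
  rw [abs_le]
  unfold stairDual
  split_ifs with a b c
  · have : (i : ℝ) ≤ M := by exact_mod_cast a
    have h1 : 0 ≤ lam * i / M := by positivity
    have h2 : lam * i / M ≤ lam := by rw [div_le_iff₀ hMR]; nlinarith
    constructor <;> linarith
  · have h1 : (i : ℝ) ≤ 2 * M := by exact_mod_cast b
    have h2 : (M : ℝ) ≤ i := by exact_mod_cast (not_le.mp a).le
    constructor <;> nlinarith
  · have h1 : (i : ℝ) ≤ 3 * M := by exact_mod_cast c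
    have h2 : 2 * (M : ℝ) ≤ i := by exact_mod_cast (not_le.mp b).le
    constructor <;> nlinarith
  · have h2 : 3 * (M : ℝ) ≤ i := by exact_mod_cast (not_le.mp c).le
    have h1 : 0 ≤ lam * (4 * M - i) / M :=
      div_nonneg (mul_nonneg hl (by linarith)) hMR.le
    have h3 : lam * (4 * M - i) / M ≤ lam := by rw [div_le_iff₀ hMR]; nlinarith
    constructor <;> linarith

/-- The increment of `stairDual` on each block; at a block's first index the previous value comes
from the preceding branch, and the branches agree at the breakpoints. -/
theorem stairDual_sub (M : ℕ) (hM : 1 ≤ M) (ε lam : ℝ) (i : ℕ) (hi : 1 ≤ i) :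
    stairDual M ε lam i - stairDual M ε lam (i - 1)
      = if i ≤ M then lam / M else if i ≤ 2 * M then ε else if i ≤ 3 * M then -ε
        else -(lam / M) := by
  have hMR : (M : ℝ) ≠ 0 := by positivity
  obtain ⟨k, rfl⟩ : ∃ k, i = k + 1 := ⟨i - 1, by omega⟩
  have key : k = M ∨ k = 2 * M ∨ k = 3 * M ∨ (k ≠ M ∧ k ≠ 2 * M ∧ k ≠ 3 * M) := by omega
  simp only [Nat.add_sub_cancel]
  unfold stairDual
  rcases key with h | h | h | h
  · subst h
    rw [if_neg (by omega), if_pos (by omega), if_pos le_rfl, if_neg (by omega),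
      if_pos (by omega)]
    push_cast; field_simp; ring
  · subst h
    rw [if_neg (by omega), if_neg (by omega), if_pos (by omega), if_neg (by omega),
      if_pos le_rfl, if_neg (by omega), if_neg (by omega), if_pos (by omega)]
    push_cast; ring
  · subst h
    rw [if_neg (by omega), if_neg (by omega), if_neg (by omega), if_neg (by omega),
      if_neg (by omega), if_pos le_rfl, if_neg (by omega), if_neg (by omega), if_neg (by omega)]
    push_cast; field_simp; ring
  · obtain ⟨h1, h2, h3⟩ := h
    split_ifs <;> first | omega | (push_cast; field_simp; ring)


/-- **TV denoising of the perturbed staircase, `ε < 0`, intermediate `λ` regime.**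
`N = 4M`, blocks `l_k = {(k−1)M+1, …, kM}` (signals are indexed by `{1, …, N}`),
`y = −1` on `l₁`, `−ε` on `l₂`, `ε` on `l₃`, `1` on `l₄`. For `−εM/2 ≤ λ ≤ M`, the unique
minimizer of `f_λ(x) = (1/2)‖y − x‖₂² + λ Σ_{i=1}^{N−1}|x_{i+1} − x_i|` equals
`−1 + λ/M` on `l₁`, `0` on `l₂ ∪ l₃` and `1 − λ/M` on `l₄`. -/
theorem tv_staircase_neg_eps_mid_lambda
    (M : ℕ) (hM : 1 ≤ M) (ε : ℝ) (hε0 : -1 < ε) (hε1 : ε < 0)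
    (y : ℕ → ℝ)
    (hy : ∀ i ∈ Finset.Icc 1 (4 * M),
      y i = if i ≤ M then -1 else if i ≤ 2 * M then -ε else if i ≤ 3 * M then ε else 1)
    (lam : ℝ) (hlam0 : -ε * M / 2 ≤ lam) (hlam1 : lam ≤ M)
    (f : (ℕ → ℝ) → ℝ)
    (hf : ∀ x, f x = (1 / 2) * ∑ i ∈ Finset.Icc 1 (4 * M), (y i - x i) ^ 2
        + lam * ∑ i ∈ Finset.Icc 1 (4 * M - 1), |x (i + 1) - x i|)
    (xs : ℕ → ℝ)
    (hxs : ∀ i ∈ Finset.Icc 1 (4 * M),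
      xs i = if i ≤ M then -1 + lam / M else if i ≤ 3 * M then 0 else 1 - lam / M) :
    (∀ x, f xs ≤ f x) ∧
      ∀ x : ℕ → ℝ, (∀ z, f x ≤ f z) → ∀ i ∈ Finset.Icc 1 (4 * M), x i = xs i := by
  have hMR : (0 : ℝ) < M := by exact_mod_cast hM
  obtain ⟨n, hn⟩ : ∃ n, 4 * M = n + 1 := ⟨4 * M - 1, by omega⟩
  have hn' : 4 * M - 1 = n := by omega
  have hjump : 0 ≤ 1 - lam / M := by
    rw [sub_nonneg, div_le_one hMR]; exact hlam1
  have gap : ∀ x, f xs + (1 / 2) * ∑ i ∈ Finset.Icc 1 (4 * M), (x i - xs i) ^ 2 ≤ f x := by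
    intro x
    rw [hf, hf, hn', hn]
    rw [hn] at hy hxs
    refine energy_gap_of_certificate n y xs (stairDual M ε lam) x lam ?_ ?_ ?_ ?_ ?_
    · simp [stairDual]
    · rw [← hn]
      unfold stairDual
      rw [if_neg (by omega), if_neg (by omega), if_neg (by omega)]
      push_cast; simp
    · intro i hi
      rw [Finset.mem_Icc] at hi
      exact abs_stairDual_le M hM ε lam hε1 hlam0 i (by omega)
    · intro i hi
      have hi' := Finset.mem_Icc.mp hi
      rw [stairDual_sub M hM ε lam i hi'.1, hy i hi, hxs i hi]
      split_ifs <;> first | omega | ring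
    · intro i hi
      rw [Finset.mem_Icc] at hi
      rw [hxs i (Finset.mem_Icc.mpr (by omega)), hxs (i + 1) (Finset.mem_Icc.mpr (by omega))]
      -- Away from the two genuine jumps, `i = M` and `i = 3 * M`, both sides vanish.
      have key : i = M ∨ i = 3 * M ∨ (i ≠ M ∧ i ≠ 3 * M) := by omega
      rcases key with h | h | ⟨h1, h2⟩
      · subst h
        rw [if_neg (by omega), if_pos (by omega), if_pos le_rfl,
          abs_of_nonneg (by linarith)]
        simp [stairDual, hMR.ne']
      · subst h
        rw [if_neg (by omega), if_neg (by omega), if_neg (by omega), if_pos le_rfl,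
          abs_of_nonneg (by linarith)]
        unfold stairDual
        rw [if_neg (by omega), if_neg (by omega), if_pos le_rfl]
        push_cast; ring
      · split_ifs <;> first | omega | simp
  refine ⟨fun x => ?_, fun x hx i hi => ?_⟩
  · have : 0 ≤ ∑ i ∈ Finset.Icc 1 (4 * M), (x i - xs i) ^ 2 :=
      Finset.sum_nonneg fun i _ => sq_nonneg _
    linarith [gap x]
  · have h1 := Finset.single_le_sum (f := fun i => (x i - xs i) ^ 2)
      (fun i _ => sq_nonneg _) hi
    have h2 : (x i - xs i) ^ 2 = 0 :=
      le_antisymm (by linarith [gap x, hx xs]) (sq_nonneg _)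
    exact sub_eq_zero.mp (pow_eq_zero_iff two_ne_zero |>.mp h2)
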